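/- Assume E[X] < ∞. Then there exists a constant v_N ∈ [0,∞) such that X_N(n)/n → v_N and X_1(n)/n → v_N as n → ∞, almost surely and in L¹. -/

import Mathlib

open MeasureTheory ProbabilityTheory Real Filter Set

noncomputable section

/-- One step of the `N`-BRW: each of the `N` particles branches into two, the children jump
according to `jump`, and only the `N` right-most particles are kept; the result is the
sorted (ascending) vector of the `N` retained positions. -/
def brwStep (N : ℕ) (pos : Fin N → ℝ) (jump : Fin N → Fin 2 → ℝ) : Fin N → ℝ := fun i =>
  (((Finset.univ : Finset (Fin N × Fin 2)).val.map fun p => pos p.1 + jump p.1 p.2).sort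
      (· ≤ ·)).getD (N + i) 0

/-- The `N`-BRW started from the sorted configuration `x0`, driven by the jumps `jump`:
`brw N x0 jump n i` is the position `X_{i+1}(n)` of the `(i+1)`-th lowest particle at time `n`. -/
def brw (N : ℕ) (x0 : Fin N → ℝ) (jump : ℕ → Fin N → Fin 2 → ℝ) : ℕ → Fin N → ℝ
  | 0 => x0
  | n + 1 => brwStep N (brw N x0 jump n) (jump n)

/-- Position `X_N(n)` of the right-most particle of the `N`-BRW started at the origin. -/
def brwMax (N : ℕ) (jump : ℕ → Fin N → Fin 2 → ℝ) (n : ℕ) : ℝ :=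
  ⨆ i, brw N (fun _ => 0) jump n i

/-- Position `X_1(n)` of the left-most particle of the `N`-BRW started at the origin. -/
def brwMin (N : ℕ) (jump : ℕ → Fin N → Fin 2 → ℝ) (n : ℕ) : ℝ :=
  ⨅ i, brw N (fun _ => 0) jump n i

lemma nb_list_key (a : ℝ) (l : List ℝ) (hl : l.Pairwise (· ≤ ·)) (j : ℕ) (hj : j < l.length) :
    a ≤ l[j] ↔ l.length - j ≤ l.countP (fun x => decide (a ≤ x)) := by
  constructor
  · intro h
    have h1 : (l.drop j).countP (fun x => decide (a ≤ x)) = (l.drop j).length := by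
      rw [List.countP_eq_length]
      intro x hx
      obtain ⟨i, hi, rfl⟩ := List.mem_iff_getElem.1 hx
      rw [List.getElem_drop]
      simp only [decide_eq_true_eq]
      refine h.trans ?_
      exact List.Pairwise.rel_get_of_le hl (a := ⟨j, hj⟩) (b := ⟨j + i, by
        rw [List.length_drop] at hi; omega⟩) (by simp)
    rw [List.length_drop] at h1
    rw [← h1]
    exact (List.drop_sublist j l).countP_le
  · intro h
    by_contra hlt
    push Not at hlt
    have h1 : (l.take (j+1)).countP (fun x => decide (a ≤ x)) = 0 := by
      rw [List.countP_eq_zero]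
      intro x hx
      obtain ⟨i, hi, rfl⟩ := List.mem_iff_getElem.1 hx
      rw [List.getElem_take]
      simp only [decide_eq_true_eq, not_le]
      refine lt_of_le_of_lt ?_ hlt
      rw [List.length_take] at hi
      exact List.Pairwise.rel_get_of_le hl (a := ⟨i, by omega⟩) (b := ⟨j, hj⟩) (by
        simp only [Fin.mk_le_mk]; omega)
    have h2 : l.countP (fun x => decide (a ≤ x)) = (l.take (j+1)).countP (fun x => decide (a ≤ x))
        + (l.drop (j+1)).countP (fun x => decide (a ≤ x)) := by
      rw [← List.countP_append, List.take_append_drop]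
    have h3 := List.countP_le_length (p := fun x => decide (a ≤ x)) (l := l.drop (j+1))
    rw [List.length_drop] at h3
    omega

lemma nb_step_key (N : ℕ) (pos : Fin N → ℝ) (jump : Fin N → Fin 2 → ℝ) (i : Fin N) (a : ℝ) :
    a ≤ brwStep N pos jump i ↔
      N - i ≤ (Finset.univ.filter fun p : Fin N × Fin 2 => a ≤ pos p.1 + jump p.1 p.2).card := by
  unfold brwStep
  set s := ((Finset.univ : Finset (Fin N × Fin 2)).val.map fun p => pos p.1 + jump p.1 p.2) with hs
  have hlen : (s.sort (· ≤ ·)).length = N * 2 := by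
    rw [Multiset.length_sort, hs]; simp
  have hi := i.2
  rw [List.getD_eq_getElem _ _ (by omega), nb_list_key a _ (Multiset.pairwise_sort s (· ≤ ·)), hlen]
  have : (s.sort (· ≤ ·)).countP (fun x => decide (a ≤ x)) =
      (Finset.univ.filter fun p : Fin N × Fin 2 => a ≤ pos p.1 + jump p.1 p.2).card := by
    rw [← Multiset.coe_countP, Multiset.sort_eq, hs, Multiset.countP_map]
    rfl
  rw [this]
  omega

lemma nb_step_count (N : ℕ) (pos : Fin N → ℝ) (jump : Fin N → Fin 2 → ℝ) (a : ℝ) :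
    (Finset.univ.filter fun i => a ≤ brwStep N pos jump i).card =
      min N (Finset.univ.filter fun p : Fin N × Fin 2 => a ≤ pos p.1 + jump p.1 p.2).card := by
  simp_rw [nb_step_key]
  generalize (Finset.univ.filter fun p : Fin N × Fin 2 => a ≤ pos p.1 + jump p.1 p.2).card = d
  rw [← Finset.card_map Fin.valEmbedding]
  have : (Finset.univ.filter fun i : Fin N => N - (i:ℕ) ≤ d).map Fin.valEmbedding
      = Finset.Ico (N - d) N := by
    ext x
    simp only [Finset.mem_map, Finset.mem_filter, Finset.mem_univ, true_and, Fin.valEmbedding_apply,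
      Finset.mem_Ico]
    constructor
    · rintro ⟨i, hi, rfl⟩; have := i.2; omega
    · rintro ⟨h1, h2⟩; exact ⟨⟨x, h2⟩, by simp only; omega, rfl⟩
  rw [this, Nat.card_Ico]; omega

lemma nb_step_mono (N : ℕ) (pos pos' : Fin N → ℝ) (h : ∀ i, pos i ≤ pos' i)
    (jump : Fin N → Fin 2 → ℝ) (i : Fin N) :
    brwStep N pos jump i ≤ brwStep N pos' jump i := by
  rw [nb_step_key]
  refine ((nb_step_key N pos jump i _).1 le_rfl).trans ?_
  refine Finset.card_le_card fun p hp => ?_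
  simp only [Finset.mem_filter, Finset.mem_univ, true_and] at hp ⊢
  linarith [h p.1]

lemma nb_step_add (N : ℕ) (pos : Fin N → ℝ) (c : ℝ)
    (jump : Fin N → Fin 2 → ℝ) (i : Fin N) :
    brwStep N (fun i => pos i + c) jump i = brwStep N pos jump i + c := by
  refine eq_of_forall_le_iff fun a => ?_
  rw [← sub_le_iff_le_add, nb_step_key, nb_step_key]
  have : ∀ p : Fin N × Fin 2, a ≤ pos p.1 + c + jump p.1 p.2 ↔ a - c ≤ pos p.1 + jump p.1 p.2 :=
    fun p => by constructor <;> intro h <;> linarith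
  simp_rw [this]

lemma nb_step_count_le (N : ℕ) (pos : Fin N → ℝ) (jump : Fin N → Fin 2 → ℝ)
    (hj : ∀ i j, 0 ≤ jump i j) (a : ℝ) :
    min N (2 * (Finset.univ.filter fun i => a ≤ pos i).card) ≤
    (Finset.univ.filter fun i => a ≤ brwStep N pos jump i).card := by
  rw [nb_step_count]
  refine min_le_min_left _ ?_
  have : ((Finset.univ.filter fun i => a ≤ pos i) ×ˢ (Finset.univ : Finset (Fin 2))).card =
      2 * (Finset.univ.filter fun i => a ≤ pos i).card := by
    rw [Finset.card_product]; simp [mul_comm]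
  rw [← this]
  refine Finset.card_le_card fun p hp => ?_
  simp only [Finset.mem_product, Finset.mem_filter, Finset.mem_univ, true_and, and_true] at hp ⊢
  linarith [hj p.1 p.2]

lemma brw_mono (N : ℕ) (x y : Fin N → ℝ) (h : ∀ i, x i ≤ y i)
    (J : ℕ → Fin N → Fin 2 → ℝ) (n : ℕ) (i : Fin N) : brw N x J n i ≤ brw N y J n i := by
  induction n generalizing i with
  | zero => exact h i
  | succ n ih => exact nb_step_mono N _ _ ih _ i

lemma brw_add (N : ℕ) (x : Fin N → ℝ) (c : ℝ)
    (J : ℕ → Fin N → Fin 2 → ℝ) (n : ℕ) :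
    brw N (fun i => x i + c) J n = fun i => brw N x J n i + c := by
  induction n with
  | zero => rfl
  | succ n ih => funext i; simp only [brw, ih]; exact nb_step_add N _ c _ i

lemma brw_markov (N : ℕ) (x : Fin N → ℝ) (J : ℕ → Fin N → Fin 2 → ℝ) (n m : ℕ) :
    brw N x J (n + m) = brw N (brw N x J n) (fun l => J (n + l)) m := by
  induction m with
  | zero => rfl
  | succ m ih => rw [← add_assoc]; simp only [brw, ih]

lemma brw_congr (N : ℕ) (x : Fin N → ℝ) (J J' : ℕ → Fin N → Fin 2 → ℝ) (n : ℕ)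
    (h : ∀ l < n, J l = J' l) : brw N x J n = brw N x J' n := by
  induction n with
  | zero => rfl
  | succ n ih => simp only [brw]; rw [ih fun l hl => h l (by omega), h n (by omega)]

lemma brw_count (N : ℕ) (x : Fin N → ℝ) (J : ℕ → Fin N → Fin 2 → ℝ)
    (hJ : ∀ n i j, 0 ≤ J n i j) (n m : ℕ) (a : ℝ) :
    min N (2 ^ m * (Finset.univ.filter fun i => a ≤ brw N x J n i).card) ≤
    (Finset.univ.filter fun i => a ≤ brw N x J (n + m) i).card := by
  induction m with
  | zero => simp
  | succ m ih =>
    rw [← add_assoc]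
    refine le_trans ?_ (nb_step_count_le N _ _ (hJ _) a)
    rw [pow_succ]
    generalize (Finset.univ.filter fun i => a ≤ brw N x J n i).card = c at *
    generalize (Finset.univ.filter fun i => a ≤ brw N x J (n+m) i).card = d at *
    have : 2 ^ m * 2 * c = 2 * (2 ^ m * c) := by ring
    rw [this]
    generalize 2 ^ m * c = e at *
    omega

section NN
variable {N : ℕ} [NeZero N]

lemma brw_le_max (J : ℕ → Fin N → Fin 2 → ℝ) (n : ℕ) (i : Fin N) :
    brw N (fun _ => 0) J n i ≤ brwMax N J n :=
  le_ciSup (f := fun i => brw N (fun _ => 0) J n i) (Set.finite_range _).bddAbove i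

lemma min_le_brw (J : ℕ → Fin N → Fin 2 → ℝ) (n : ℕ) (i : Fin N) :
    brwMin N J n ≤ brw N (fun _ => 0) J n i :=
  ciInf_le (f := fun i => brw N (fun _ => 0) J n i) (Set.finite_range _).bddBelow i

lemma exists_max (J : ℕ → Fin N → Fin 2 → ℝ) (n : ℕ) :
    ∃ i, brw N (fun _ => 0) J n i = brwMax N J n :=
  exists_eq_ciSup_of_finite

lemma nb_min_le_max (J : ℕ → Fin N → Fin 2 → ℝ) (n : ℕ) : brwMin N J n ≤ brwMax N J n :=
  (min_le_brw J n 0).trans (brw_le_max J n 0)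

lemma nb_max_sub (J : ℕ → Fin N → Fin 2 → ℝ) (n m : ℕ) :
    brwMax N J (n + m) ≤ brwMax N J n + brwMax N (fun l => J (n + l)) m := by
  refine ciSup_le fun i => ?_
  rw [brw_markov]
  refine (brw_mono N _ (fun i => 0 + brwMax N J n) (fun i => ?_) _ _ i).trans ?_
  · simpa using brw_le_max J n i
  · rw [brw_add N (fun _ => 0)]
    linarith [brw_le_max (fun l => J (n + l)) m i]

lemma nb_min_super (J : ℕ → Fin N → Fin 2 → ℝ) (n m : ℕ) :
    brwMin N J n + brwMin N (fun l => J (n + l)) m ≤ brwMin N J (n + m) := by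
  refine le_ciInf fun i => ?_
  rw [brw_markov]
  refine le_trans ?_ (brw_mono N (fun i => 0 + brwMin N J n) _ (fun i => ?_) _ _ i)
  · rw [brw_add N (fun _ => 0)]
    linarith [min_le_brw (fun l => J (n + l)) m i]
  · simpa using min_le_brw J n i

lemma nb_max_mono (J : ℕ → Fin N → Fin 2 → ℝ) (hJ : ∀ n i j, 0 ≤ J n i j) :
    Monotone (brwMax N J) := by
  refine monotone_nat_of_le_succ fun n => ?_
  have h := brw_count N (fun _ => 0) J hJ n 1 (brwMax N J n)
  obtain ⟨i, hi⟩ := exists_max J n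
  have h1 : 0 < (Finset.univ.filter fun i => brwMax N J n ≤ brw N (fun _ => 0) J n i).card :=
    Finset.card_pos.2 ⟨i, by simp [hi]⟩
  have h0 : 0 < N := Nat.pos_of_neZero N
  obtain ⟨k, hk⟩ := Finset.card_pos.1 (lt_of_lt_of_le (by
    rw [lt_min_iff]; exact ⟨h0, by positivity⟩) h)
  simp only [Finset.mem_filter, Finset.mem_univ, true_and] at hk
  exact hk.trans (brw_le_max J _ k)

lemma le_min_of_count (J : ℕ → Fin N → Fin 2 → ℝ) (n : ℕ) (a : ℝ)
    (h : N ≤ (Finset.univ.filter fun i => a ≤ brw N (fun _ => 0) J n i).card) :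
    a ≤ brwMin N J n := by
  refine le_ciInf fun i => ?_
  have : (Finset.univ.filter fun i => a ≤ brw N (fun _ => 0) J n i) = Finset.univ :=
    Finset.eq_univ_of_card _ (le_antisymm (Finset.card_le_univ _) (by simpa using h))
  simpa using Finset.ext_iff.1 this i

lemma nb_min_mono (J : ℕ → Fin N → Fin 2 → ℝ) (hJ : ∀ n i j, 0 ≤ J n i j) :
    Monotone (brwMin N J) := by
  refine monotone_nat_of_le_succ fun n => ?_
  have h := brw_count N (fun _ => 0) J hJ n 1 (brwMin N J n)
  have h1 : (Finset.univ.filter fun i => brwMin N J n ≤ brw N (fun _ => 0) J n i) = Finset.univ :=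
    Finset.filter_true_of_mem fun i _ => min_le_brw J n i
  rw [h1, Finset.card_univ, Fintype.card_fin] at h
  exact le_min_of_count J _ _ (by omega)

lemma nb_max_le_min (J : ℕ → Fin N → Fin 2 → ℝ) (hJ : ∀ n i j, 0 ≤ J n i j) (n : ℕ) :
    brwMax N J n ≤ brwMin N J (n + N) := by
  have h := brw_count N (fun _ => 0) J hJ n N (brwMax N J n)
  obtain ⟨i, hi⟩ := exists_max J n
  have h1 : 0 < (Finset.univ.filter fun i => brwMax N J n ≤ brw N (fun _ => 0) J n i).card :=
    Finset.card_pos.2 ⟨i, by simp [hi]⟩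
  refine le_min_of_count J _ _ (le_trans (le_min le_rfl ?_) h)
  exact (Nat.lt_two_pow_self (n := N)).le.trans (Nat.le_mul_of_pos_right _ h1)

lemma nb_min_zero (J : ℕ → Fin N → Fin 2 → ℝ) : brwMin N J 0 = 0 := by simp [brwMin, brw]
lemma nb_max_zero (J : ℕ → Fin N → Fin 2 → ℝ) : brwMax N J 0 = 0 := by simp [brwMax, brw]

lemma nb_min_nonneg (J : ℕ → Fin N → Fin 2 → ℝ) (hJ : ∀ n i j, 0 ≤ J n i j) (n : ℕ) :
    0 ≤ brwMin N J n := by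
  rw [← nb_min_zero J]; exact nb_min_mono J hJ (Nat.zero_le n)

lemma nb_max_one (J : ℕ → Fin N → Fin 2 → ℝ) (hJ : ∀ n i j, 0 ≤ J n i j) :
    brwMax N J 1 ≤ ∑ p : Fin N × Fin 2, J 0 p.1 p.2 := by
  refine ciSup_le fun i => ?_
  have h := (nb_step_key N (fun _ => 0) (J 0) i _).1 le_rfl
  have hi := i.2
  obtain ⟨p, hp⟩ := Finset.card_pos.1 (lt_of_lt_of_le (by omega : 0 < N - (i:ℕ)) h)
  simp only [Finset.mem_filter, Finset.mem_univ, true_and, zero_add] at hp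
  exact hp.trans (Finset.single_le_sum (f := fun p : Fin N × Fin 2 => J 0 p.1 p.2)
    (fun p _ => hJ _ _ _) (Finset.mem_univ p))

lemma nb_max_le_sum (J : ℕ → Fin N → Fin 2 → ℝ) (hJ : ∀ n i j, 0 ≤ J n i j) (n : ℕ) :
    brwMax N J n ≤ ∑ l ∈ Finset.range n, ∑ p : Fin N × Fin 2, J l p.1 p.2 := by
  induction n with
  | zero => simp [nb_max_zero]
  | succ n ih =>
    rw [Finset.sum_range_succ]
    refine (nb_max_sub J n 1).trans (add_le_add ih ?_)
    exact nb_max_one _ (fun _ _ _ => hJ _ _ _)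

lemma nb_max_block (J : ℕ → Fin N → Fin 2 → ℝ) (k j : ℕ) :
    brwMax N J (k * j) ≤ ∑ i ∈ Finset.range j, brwMax N (fun l => J (k * i + l)) k := by
  induction j with
  | zero => simp [nb_max_zero]
  | succ n ih =>
    rw [Finset.sum_range_succ, mul_add, mul_one]
    exact (nb_max_sub J _ k).trans (add_le_add ih le_rfl)

lemma nb_min_block (J : ℕ → Fin N → Fin 2 → ℝ) (k j : ℕ) :
    ∑ i ∈ Finset.range j, brwMin N (fun l => J (k * i + l)) k ≤ brwMin N J (k * j) := by
  induction j with
  | zero => simp [nb_min_zero]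
  | succ n ih =>
    rw [Finset.sum_range_succ, mul_add, mul_one]
    exact (add_le_add ih le_rfl).trans (nb_min_super J _ k)

lemma brw_measurable (n : ℕ) (i : Fin N) :
    Measurable fun J : ℕ → Fin N → Fin 2 → ℝ => brw N (fun _ => 0) J n i := by
  induction n generalizing i with
  | zero => exact measurable_const
  | succ n ih =>
    refine measurable_of_Ici fun a => ?_
    have : (fun J : ℕ → Fin N → Fin 2 → ℝ => brw N (fun _ => 0) J (n+1) i) ⁻¹' Ici a =
      (fun J : ℕ → Fin N → Fin 2 → ℝ => ∑ p : Fin N × Fin 2,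
        Set.indicator {J : ℕ → Fin N → Fin 2 → ℝ | a ≤ brw N (fun _ => 0) J n p.1 + J n p.1 p.2}
          (fun _ => (1:ℕ)) J) ⁻¹' Ici (N - i) := by
      ext J
      simp only [Set.mem_preimage, Set.mem_Ici, brw, nb_step_key, Finset.card_filter,
        Set.indicator_apply, Set.mem_ofPred_eq]
    rw [this]
    refine Finset.measurable_sum _ (fun p _ => ?_) measurableSet_Ici
    refine measurable_const.indicator (measurableSet_le measurable_const ?_)
    have := ih p.1
    fun_prop

lemma nb_max_measurable (n : ℕ) :
    Measurable fun J : ℕ → Fin N → Fin 2 → ℝ => brwMax N J n :=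
  Measurable.iSup fun i => brw_measurable n i

lemma nb_min_measurable (n : ℕ) :
    Measurable fun J : ℕ → Fin N → Fin 2 → ℝ => brwMin N J n :=
  Measurable.iInf fun i => brw_measurable n i

end NN

section PP
variable {Ω : Type*} [MeasurableSpace Ω] (P : Measure Ω) [IsProbabilityMeasure P]
    {N : ℕ} (ξ : ℕ → Fin N → Fin 2 → Ω → ℝ)

lemma shift_ident (X : Ω → ℝ)
    (hξmeas : ∀ n i j, Measurable (ξ n i j))
    (hξdist : ∀ n i j, Measure.map (ξ n i j) P = Measure.map X P)
    (hξindep : iIndepFun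
      (fun p : ℕ × Fin N × Fin 2 => ξ p.1 p.2.1 p.2.2) P)
    (F : (ℕ → Fin N → Fin 2 → ℝ) → ℝ) (hF : Measurable F) (n : ℕ) :
    IdentDistrib (fun ω => F (fun l i j => ξ (n + l) i j ω)) (fun ω => F (fun l i j => ξ l i j ω))
      P P := by
  have hg : Function.Injective (fun p : ℕ × Fin N × Fin 2 => (n + p.1, p.2)) := by
    rintro ⟨a, b⟩ ⟨c, d⟩ h
    simp only [Prod.mk.injEq] at h ⊢
    exact ⟨by omega, h.2⟩
  have h1 := (hξindep.precomp hg).map_fun_eq_infinitePi_map (fun p => hξmeas _ _ _)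
  have h2 := hξindep.map_fun_eq_infinitePi_map (fun p => hξmeas _ _ _)
  simp only [Function.comp_apply, hξdist] at h1 h2
  have hid : IdentDistrib (fun ω (p : ℕ × Fin N × Fin 2) => ξ (n + p.1) p.2.1 p.2.2 ω)
      (fun ω (p : ℕ × Fin N × Fin 2) => ξ p.1 p.2.1 p.2.2 ω) P P :=
    ⟨(measurable_pi_lambda _ fun p => hξmeas _ _ _).aemeasurable,
     (measurable_pi_lambda _ fun p => hξmeas _ _ _).aemeasurable, h1.trans h2.symm⟩
  exact hid.comp (u := fun y => F (fun l i j => y (l, i, j))) (hF.comp (by fun_prop))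

lemma block_indep
    (hξmeas : ∀ n i j, Measurable (ξ n i j))
    (hξindep : iIndepFun
      (fun p : ℕ × Fin N × Fin 2 => ξ p.1 p.2.1 p.2.2) P)
    (F : (ℕ → Fin N → Fin 2 → ℝ) → ℝ) (hF : Measurable F) (k : ℕ)
    (hloc : ∀ J J', (∀ l < k, J l = J' l) → F J = F J') (a b : ℕ) (hab : a ≠ b) :
    IndepFun (fun ω => F (fun l i j => ξ (k * a + l) i j ω))
      (fun ω => F (fun l i j => ξ (k * b + l) i j ω)) P := by
  let S : ℕ → Finset (ℕ × Fin N × Fin 2) := fun a =>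
    Finset.Ico (k * a) (k * a + k) ×ˢ Finset.univ
  have hdis : Disjoint (S a) (S b) := by
    rw [Finset.disjoint_left]
    rintro ⟨x, y⟩ h1 h2
    simp only [S, Finset.mem_product, Finset.mem_Ico, Finset.mem_univ, and_true] at h1 h2
    rcases lt_or_gt_of_ne hab with h | h
    · have : k * (a + 1) ≤ k * b := Nat.mul_le_mul_left k h
      rw [mul_add, mul_one] at this; omega
    · have : k * (b + 1) ≤ k * a := Nat.mul_le_mul_left k h
      rw [mul_add, mul_one] at this; omega
  have h := hξindep.indepFun_finset (S a) (S b) hdis (fun p => hξmeas _ _ _)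
  let G : (c : ℕ) → (S c → ℝ) → ℝ := fun c y => F (fun l i j =>
    if h : (k * c + l, i, j) ∈ S c then y ⟨_, h⟩ else 0)
  have hG : ∀ c, Measurable (G c) := by
    intro c
    refine hF.comp ?_
    refine measurable_pi_lambda _ fun l => measurable_pi_lambda _ fun i =>
      measurable_pi_lambda _ fun j => ?_
    split_ifs with h
    · exact measurable_pi_apply _
    · exact measurable_const
  have hGe : ∀ c, (fun ω => F (fun l i j => ξ (k * c + l) i j ω)) =
      G c ∘ (fun ω (p : S c) => ξ p.1.1 p.1.2.1 p.1.2.2 ω) := by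
    intro c
    funext ω
    refine hloc _ _ fun l hl => ?_
    funext i j
    have : (k * c + l, i, j) ∈ S c := by
      simp only [S, Finset.mem_product, Finset.mem_Ico, Finset.mem_univ, and_true]; omega
    rw [dif_pos this]
  rw [hGe a, hGe b]
  exact h.comp (hG a) (hG b)

lemma block_slln (X : Ω → ℝ)
    (hξmeas : ∀ n i j, Measurable (ξ n i j))
    (hξdist : ∀ n i j, Measure.map (ξ n i j) P = Measure.map X P)
    (hξindep : iIndepFun
      (fun p : ℕ × Fin N × Fin 2 => ξ p.1 p.2.1 p.2.2) P)
    (F : (ℕ → Fin N → Fin 2 → ℝ) → ℝ) (hF : Measurable F) (k : ℕ)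
    (hloc : ∀ J J', (∀ l < k, J l = J' l) → F J = F J')
    (hint : Integrable (fun ω => F (fun l i j => ξ l i j ω)) P) :
    ∀ᵐ ω ∂P, Tendsto (fun n : ℕ =>
      (∑ a ∈ Finset.range n, F (fun l i j => ξ (k * a + l) i j ω)) / n) atTop
      (nhds (∫ ω, F (fun l i j => ξ l i j ω) ∂P)) := by
  have := strong_law_ae_real (μ := P) (fun a ω => F (fun l i j => ξ (k * a + l) i j ω))
    (by simpa using hint)
    (fun a b hab => block_indep P ξ hξmeas hξindep F hF k hloc a b hab)
    (fun a => by simpa using shift_ident P ξ X hξmeas hξdist hξindep F hF (k * a))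
  simpa using this

lemma nb_scheffe (f : ℕ → Ω → ℝ) (v : ℝ) (hv : 0 ≤ v) (hf0 : ∀ n ω, 0 ≤ f n ω)
    (hfi : ∀ n, Integrable (f n) P) (hae : ∀ᵐ ω ∂P, Tendsto (fun n => f n ω) atTop (nhds v))
    (hE : Tendsto (fun n => ∫ ω, f n ω ∂P) atTop (nhds v)) :
    Tendsto (fun n => ∫ ω, |f n ω - v| ∂P) atTop (nhds 0) := by
  have hint : ∀ n, Integrable (fun ω => max (v - f n ω) 0) P := fun n =>
    ((integrable_const v).sub (hfi n)).pos_part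
  have h1 : Tendsto (fun n => ∫ ω, max (v - f n ω) 0 ∂P) atTop (nhds (∫ _ω, (0:ℝ) ∂P)) := by
    refine tendsto_integral_of_dominated_convergence (fun _ => v)
      (fun n => (hint n).aestronglyMeasurable) (integrable_const v) (fun n => ?_) ?_
    · filter_upwards with ω
      rw [Real.norm_of_nonneg (le_max_right _ _)]
      exact max_le (by linarith [hf0 n ω]) hv
    · filter_upwards [hae] with ω h
      have : Tendsto (fun n => max (v - f n ω) 0) atTop (nhds (max (v - v) 0)) :=
        (tendsto_const_nhds.sub h).max tendsto_const_nhds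
      simpa using this
  have h2 : ∀ n, ∫ ω, |f n ω - v| ∂P = 2 * ∫ ω, max (v - f n ω) 0 ∂P + (∫ ω, f n ω ∂P - v) := by
    intro n
    have : ∫ ω, f n ω ∂P - v = ∫ ω, (f n ω - v) ∂P := by
      rw [integral_sub (hfi n) (integrable_const v)]; simp
    have hi2 : Integrable (fun ω => f n ω - v) P := (hfi n).sub (integrable_const v)
    rw [this, ← integral_const_mul, ← integral_add ((hint n).const_mul 2) hi2]
    refine integral_congr_ae (Eventually.of_forall fun ω => ?_)
    simp only
    rcases le_total (f n ω) v with h | h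
    · rw [abs_of_nonpos (by linarith), max_eq_left (by linarith)]; ring
    · rw [abs_of_nonneg (by linarith), max_eq_right (by linarith)]; ring
  simp_rw [h2]
  have := (h1.const_mul 2).add (hE.sub_const v)
  simpa using this

end PP

lemma nb_div_tendsto (k : ℕ) (hk : 0 < k) :
    Tendsto (fun n : ℕ => ((n / k : ℕ) : ℝ) / n) atTop (nhds (1 / k)) := by
  have h := (tendsto_nat_floor_mul_div_atTop (R := ℝ) (a := 1 / k) (by positivity)).comp
    tendsto_natCast_atTop_atTop
  refine h.congr fun n => ?_
  simp only [Function.comp_apply]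
  rw [one_div_mul_eq_div, Nat.floor_div_eq_div]

lemma nb_div_atTop (k : ℕ) (hk : 0 < k) : Tendsto (fun n : ℕ => n / k) atTop atTop := by
  refine tendsto_atTop_atTop.2 fun b => ⟨b * k, fun a ha => (Nat.le_div_iff_mul_le hk).2 ha⟩

lemma nb_upper (y S : ℕ → ℝ) (hy : Monotone y) (k : ℕ) (hk : 0 < k)
    (hS : ∀ j, y (k * j) ≤ S j) (c : ℝ) (hc : Tendsto (fun j : ℕ => S j / j) atTop (nhds c))
    (b : ℝ) (hb : c / k < b) : ∀ᶠ n : ℕ in atTop, y n / n < b := by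
  have h1 : Tendsto (fun n : ℕ => S (n / k + 1) / ((n / k + 1 : ℕ) : ℝ)) atTop (nhds c) :=
    hc.comp ((tendsto_add_atTop_nat 1).comp (nb_div_atTop k hk))
  have h2 : Tendsto (fun n : ℕ => ((n / k + 1 : ℕ) : ℝ) / n) atTop (nhds (1 / k)) := by
    have := (nb_div_tendsto k hk).add (tendsto_one_div_atTop_nhds_zero_nat (𝕜 := ℝ))
    rw [add_zero] at this
    refine this.congr fun n => ?_
    push_cast
    rw [add_div]
  have h3 := h1.mul h2
  rw [mul_one_div] at h3
  filter_upwards [h3.eventually (gt_mem_nhds hb), eventually_gt_atTop 0] with n hn hn0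
  refine lt_of_le_of_lt ?_ hn
  have : ((n / k + 1 : ℕ) : ℝ) ≠ 0 := by positivity
  rw [div_mul_div_cancel₀ this]
  gcongr
  refine (hy ?_).trans (hS _)
  exact (Nat.lt_mul_div_succ n hk).le

lemma nb_lower (y S : ℕ → ℝ) (hy : Monotone y) (k : ℕ) (hk : 0 < k)
    (hS : ∀ j, S j ≤ y (k * j)) (c : ℝ) (hc : Tendsto (fun j : ℕ => S j / j) atTop (nhds c))
    (b : ℝ) (hb : b < c / k) : ∀ᶠ n : ℕ in atTop, b < y n / n := by
  have h1 : Tendsto (fun n : ℕ => S (n / k) / ((n / k : ℕ) : ℝ)) atTop (nhds c) :=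
    hc.comp (nb_div_atTop k hk)
  have h3 := h1.mul (nb_div_tendsto k hk)
  rw [mul_one_div] at h3
  filter_upwards [h3.eventually (lt_mem_nhds hb), eventually_ge_atTop k] with n hn hn0
  refine lt_of_lt_of_le hn ?_
  have : ((n / k : ℕ) : ℝ) ≠ 0 := by
    have := Nat.div_pos hn0 hk
    positivity
  rw [div_mul_div_cancel₀ this]
  gcongr
  exact (hS _).trans (hy (Nat.mul_div_le n k))

/-- if `E[X] < ∞`, there is a constant `v_N ∈ [0,∞)` such that
`X_N(n)/n → v_N` and `X_1(n)/n → v_N` as `n → ∞`, almost surely and in `L¹`. -/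
theorem stmt_7 {Ω : Type*} [MeasurableSpace Ω] (P : Measure Ω) [IsProbabilityMeasure P]
    (X : Ω → ℝ) (hXmeas : Measurable X) (hXpos : ∀ ω, 0 ≤ X ω)
    (hXint : Integrable X P)
    (N : ℕ) (hN : 1 ≤ N)
    (ξ : ℕ → Fin N → Fin 2 → Ω → ℝ)
    (hξmeas : ∀ n i j, Measurable (ξ n i j))
    (hξpos : ∀ n i j ω, 0 ≤ ξ n i j ω)
    (hξdist : ∀ n i j, Measure.map (ξ n i j) P = Measure.map X P)
    (hξindep : iIndepFun
      (fun p : ℕ × Fin N × Fin 2 => ξ p.1 p.2.1 p.2.2) P) :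
    ∃ v : ℝ, 0 ≤ v ∧
      (∀ᵐ ω ∂P, Tendsto
        (fun n : ℕ => brwMax N (fun k i j => ξ k i j ω) n / n) atTop (nhds v)) ∧
      (∀ᵐ ω ∂P, Tendsto
        (fun n : ℕ => brwMin N (fun k i j => ξ k i j ω) n / n) atTop (nhds v)) ∧
      Tendsto (fun n : ℕ =>
        ∫ ω, |brwMax N (fun k i j => ξ k i j ω) n / n - v| ∂P) atTop (nhds 0) ∧
      Tendsto (fun n : ℕ =>
        ∫ ω, |brwMin N (fun k i j => ξ k i j ω) n / n - v| ∂P) atTop (nhds 0) := by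
  haveI : NeZero N := ⟨by omega⟩
  have hJ : ∀ ω, ∀ n i j, 0 ≤ (fun k i j => ξ k i j ω : ℕ → Fin N → Fin 2 → ℝ) n i j :=
    fun ω n i j => hξpos n i j ω
  set M : ℕ → Ω → ℝ := fun n ω => brwMax N (fun k i j => ξ k i j ω) n with hM
  set m : ℕ → Ω → ℝ := fun n ω => brwMin N (fun k i j => ξ k i j ω) n with hm
  have hJmeas : Measurable (fun ω => (fun k i j => ξ k i j ω : ℕ → Fin N → Fin 2 → ℝ)) :=
    measurable_pi_lambda _ fun l => measurable_pi_lambda _ fun i =>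
      measurable_pi_lambda _ fun j => hξmeas l i j
  have hMmeas : ∀ n, Measurable (M n) := fun n => (nb_max_measurable n).comp hJmeas
  have hmmeas : ∀ n, Measurable (m n) := fun n => (nb_min_measurable n).comp hJmeas
  have hmM : ∀ n ω, m n ω ≤ M n ω := fun n ω => nb_min_le_max _ n
  have hm0 : ∀ n ω, 0 ≤ m n ω := fun n ω => nb_min_nonneg _ (hJ ω) n
  have hM0 : ∀ n ω, 0 ≤ M n ω := fun n ω => (hm0 n ω).trans (hmM n ω)
  have hξint : ∀ n i j, Integrable (ξ n i j) P := by
    intro n i j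
    have hid : IdentDistrib (ξ n i j) X P P :=
      ⟨(hξmeas n i j).aemeasurable, hXmeas.aemeasurable, hξdist n i j⟩
    exact hid.integrable_iff.2 hXint
  have hMint : ∀ n, Integrable (M n) P := by
    intro n
    refine Integrable.mono' (g := fun ω => ∑ l ∈ Finset.range n, ∑ p : Fin N × Fin 2,
      ξ l p.1 p.2 ω) ?_ (hMmeas n).aestronglyMeasurable (Eventually.of_forall fun ω => ?_)
    · exact integrable_finsetSum _ fun l _ => integrable_finsetSum _ fun p _ => hξint _ _ _
    · rw [Real.norm_of_nonneg (hM0 n ω)]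
      exact nb_max_le_sum _ (hJ ω) n
  have hmint : ∀ n, Integrable (m n) P := by
    intro n
    refine (hMint n).mono' (hmmeas n).aestronglyMeasurable (Eventually.of_forall fun ω => ?_)
    rw [Real.norm_of_nonneg (hm0 n ω)]
    exact hmM n ω
  have hsub : Subadditive (fun n => ∫ ω, M n ω ∂P) := by
    intro a b
    have hid := shift_ident P ξ X hξmeas hξdist hξindep (fun J => brwMax N J b)
      (nb_max_measurable b) a
    have hi : Integrable (fun ω => brwMax N (fun l i j => ξ (a + l) i j ω) b) P :=
      hid.integrable_iff.2 (hMint b)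
    have he : ∫ ω, brwMax N (fun l i j => ξ (a + l) i j ω) b ∂P = ∫ ω, M b ω ∂P :=
      hid.integral_eq
    simp only
    rw [← he, ← integral_add (hMint a) hi]
    exact integral_mono (hMint _) ((hMint a).add hi) fun ω => nb_max_sub _ a b
  have hbdd : BddBelow (range fun n : ℕ => (∫ ω, M n ω ∂P) / n) :=
    ⟨0, by rintro _ ⟨n, rfl⟩; exact div_nonneg (integral_nonneg (hM0 n)) (Nat.cast_nonneg n)⟩
  have hEM := hsub.tendsto_lim hbdd
  set v := hsub.lim with hv
  have hv0 : 0 ≤ v := ge_of_tendsto' hEM fun n =>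
    div_nonneg (integral_nonneg (hM0 n)) (Nat.cast_nonneg n)
  have hEm : Tendsto (fun n : ℕ => (∫ ω, m n ω ∂P) / n) atTop (nhds v) := by
    rw [← tendsto_add_atTop_iff_nat N]
    have hup := (tendsto_add_atTop_iff_nat N).2 hEM
    have hlo : Tendsto (fun n : ℕ => (∫ ω, M n ω ∂P) / ((n + N : ℕ) : ℝ)) atTop (nhds v) := by
      have h1 : Tendsto (fun n : ℕ => (n : ℝ) / ((n : ℝ) + (N : ℝ))) atTop (nhds 1) :=
        tendsto_natCast_div_add_atTop (N : ℝ)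
      have h2 := hEM.mul h1
      rw [mul_one] at h2
      refine h2.congr' ?_
      filter_upwards [eventually_gt_atTop 0] with n hn
      have : (n : ℝ) ≠ 0 := by positivity
      push_cast
      rw [div_mul_div_cancel₀ this]
    refine tendsto_of_tendsto_of_tendsto_of_le_of_le hlo hup (fun n => ?_) (fun n => ?_)
    · simp only
      gcongr
      · exact hMint n
      · exact hmint _
      · exact fun ω => nb_max_le_min _ (hJ ω) n
    · simp only
      gcongr
      · exact hmint _
      · exact hMint _
      · exact fun ω => hmM _ ω
  have hlocM : ∀ k (J J' : ℕ → Fin N → Fin 2 → ℝ), (∀ l < k, J l = J' l) →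
      brwMax N J k = brwMax N J' k := fun k J J' h => by
    unfold brwMax; rw [brw_congr N _ J J' k h]
  have hlocm : ∀ k (J J' : ℕ → Fin N → Fin 2 → ℝ), (∀ l < k, J l = J' l) →
      brwMin N J k = brwMin N J' k := fun k J J' h => by
    unfold brwMin; rw [brw_congr N _ J J' k h]
  have hSM := ae_all_iff.2 fun k => block_slln P ξ X hξmeas hξdist hξindep
    (fun J => brwMax N J k) (nb_max_measurable k) k (hlocM k) (hMint k)
  have hSm := ae_all_iff.2 fun k => block_slln P ξ X hξmeas hξdist hξindep
    (fun J => brwMin N J k) (nb_min_measurable k) k (hlocm k) (hmint k)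
  have hupper : ∀ᵐ ω ∂P, ∀ b > v, ∀ᶠ n : ℕ in atTop, M n ω / n < b := by
    filter_upwards [hSM] with ω hω b hb
    obtain ⟨k, hk, hk0⟩ := ((hEM.eventually (gt_mem_nhds hb)).and (eventually_gt_atTop 0)).exists
    exact nb_upper (fun n => M n ω) _ (nb_max_mono _ (hJ ω)) k hk0
      (fun j => nb_max_block _ k j) _ (hω k) b hk
  have hlower : ∀ᵐ ω ∂P, ∀ b < v, ∀ᶠ n : ℕ in atTop, b < m n ω / n := by
    filter_upwards [hSm] with ω hω b hb
    obtain ⟨k, hk, hk0⟩ := ((hEm.eventually (lt_mem_nhds hb)).and (eventually_gt_atTop 0)).exists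
    exact nb_lower (fun n => m n ω) _ (nb_min_mono _ (hJ ω)) k hk0
      (fun j => nb_min_block _ k j) _ (hω k) b hk
  have hle : ∀ ω (n : ℕ), m n ω / n ≤ M n ω / n := fun ω n =>
    div_le_div_of_nonneg_right (hmM n ω) (Nat.cast_nonneg n)
  have haeM : ∀ᵐ ω ∂P, Tendsto (fun n : ℕ => M n ω / n) atTop (nhds v) := by
    filter_upwards [hupper, hlower] with ω h1 h2
    exact tendsto_order.2 ⟨fun b hb => (h2 b hb).mono fun n hn => hn.trans_le (hle ω n), h1⟩
  have haem : ∀ᵐ ω ∂P, Tendsto (fun n : ℕ => m n ω / n) atTop (nhds v) := by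
    filter_upwards [hupper, hlower] with ω h1 h2
    exact tendsto_order.2 ⟨h2, fun b hb => (h1 b hb).mono fun n hn => (hle ω n).trans_lt hn⟩
  refine ⟨v, hv0, haeM, haem, ?_, ?_⟩
  · refine nb_scheffe P (fun n ω => M n ω / n) v hv0
      (fun n ω => div_nonneg (hM0 n ω) (Nat.cast_nonneg n)) (fun n => (hMint n).div_const _) haeM ?_
    simpa only [integral_div] using hEM
  · refine nb_scheffe P (fun n ω => m n ω / n) v hv0
      (fun n ω => div_nonneg (hm0 n ω) (Nat.cast_nonneg n)) (fun n => (hmint n).div_const _) haem ?_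
    simpa only [integral_div] using hEm

end
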